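/- For every real β ≥ 0, all integers m ≥ n+1 with n ≥ 1, and every quaternion q ∈ ℍ with conjugate q̄: Z^{(β)}_{m,n}(q,q̄) = Z^{(β)}_{m−1,n−1}(q,q̄) + q · Z^{(β)}_{m−1,n}(q,q̄). -/

import Mathlib

open Finset Quaternion

/-- Pochhammer symbol `(a)_j = a (a+1) ⋯ (a+j-1)`. -/
noncomputable def poch (a : ℝ) (j : ℕ) : ℝ := ∏ i ∈ Finset.range j, (a + i)

/-- The quaternionic 2D Laguerre polynomial `Z^{(β)}_{m,n}(q,q̄)` (for `m ≥ n`). -/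
noncomputable def Zq (β : ℝ) (m n : ℕ) (q : ℍ[ℝ]) : ℍ[ℝ] :=
  ∑ k ∈ Finset.range (n + 1),
    ((-1 : ℝ) ^ (n - k) * poch (β + 1) m /
        (k.factorial * (n - k).factorial * poch (β + 1) (m - k))) •
      (q ^ (m - k) * (star q) ^ (n - k))

/-!
Since `(β+1)_m / (k! (β+1)_{m-k})` is the generalized binomial coefficient `choose (β + m) k`,
we have `Z_{m,n} = ∑ k, (-1)^(n-k) / (n-k)! * choose (β + m) k * q^(m-k) * q̄^(n-k)`. In this form
the recurrence is Pascal's rule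
`choose (β + m) k = choose (β + m - 1) (k - 1) + choose (β + m - 1) k`, applied term by term.
-/

section General

variable {K A : Type*} [Field K] [CharZero K] [Ring A] [Algebra K A]

/-- The 2D Laguerre polynomial `Z^{(β)}_{m,n}(x, y)` (for `m ≥ n`) in two elements of a `K`-algebra
which need not commute. The coefficients are written with `Ring.choose (β + m) k` in place of the
quotient `(β+1)_m / (k! (β+1)_{m-k})`, so that negative integers `β` are not exceptional. -/
noncomputable def laguerre2D (β : K) (m n : ℕ) (x y : A) : A :=
  ∑ k ∈ range (n + 1),
    ((-1) ^ (n - k) / (n - k).factorial * Ring.choose (β + m) k) • (x ^ (m - k) * y ^ (n - k))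

theorem quat_recurrence_split_general (β : K) {m n : ℕ} (hn : 1 ≤ n) (hmn : n + 1 ≤ m) (x y : A) :
    laguerre2D β m n x y =
      laguerre2D β (m - 1) (n - 1) x y + x * laguerre2D β (m - 1) n x y := by
  obtain ⟨n, rfl⟩ := Nat.exists_eq_add_of_le' hn
  obtain ⟨m, rfl⟩ := Nat.exists_eq_add_of_le' (Nat.one_le_of_lt hmn)
  simp only [Nat.add_sub_cancel, laguerre2D, sum_range_succ' _ (n + 1), mul_add, mul_sum,
    ← add_assoc, ← sum_add_distrib]
  congr 1
  · refine sum_congr rfl fun k hk ↦ ?_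
    have hkm : k + 1 ≤ m := by grind
    have pascal : Ring.choose (β + ↑(m + 1)) (k + 1) =
        Ring.choose (β + m) k + Ring.choose (β + m) (k + 1) := by
      rw [Nat.cast_succ, ← add_assoc, Ring.choose_succ_succ]
    have pow_split : x ^ (m - k) = x * x ^ (m - (k + 1)) := by
      rw [← pow_succ']
      congr 1
      omega
    rw [pascal, mul_add, add_smul, Nat.add_sub_add_right, Nat.add_sub_add_right, mul_smul_comm,
      ← mul_assoc, ← pow_split]
  · simp [pow_succ', mul_assoc]

end General

theorem poch_pos {a : ℝ} (ha : 0 < a) (j : ℕ) : 0 < poch a j :=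
  prod_pos fun i _ ↦ by positivity

theorem poch_add (a : ℝ) (j k : ℕ) : poch a (j + k) = poch a j * poch (a + j) k := by
  simp only [poch, prod_range_add, Nat.cast_add, add_assoc]

theorem poch_eq_ascPochhammer_eval (a : ℝ) (j : ℕ) : poch a j = (ascPochhammer ℝ j).eval a := by
  induction j with
  | zero => simp [poch]
  | succ j ih => rw [ascPochhammer_succ_eval, ← ih, poch, prod_range_succ, poch]

theorem poch_eq_factorial_mul_choose (a : ℝ) (k : ℕ) :
    poch a k = k.factorial * Ring.choose (a + k - 1) k := by
  rw [← Ring.multichoose_eq, ← nsmul_eq_mul, Ring.factorial_nsmul_multichoose_eq_ascPochhammer,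
    Polynomial.ascPochhammer_smeval_eq_eval, poch_eq_ascPochhammer_eval]

theorem poch_eq_poch_sub_mul_choose (β : ℝ) {m k : ℕ} (hkm : k ≤ m) :
    poch (β + 1) m = poch (β + 1) (m - k) * (k.factorial * Ring.choose (β + m) k) := by
  obtain ⟨j, rfl⟩ := Nat.exists_eq_add_of_le' hkm
  rw [Nat.add_sub_cancel, poch_add, poch_eq_factorial_mul_choose (β + 1 + j)]
  congr 3
  push_cast
  ring

theorem Zq_eq_laguerre2D {β : ℝ} {m n : ℕ} (hβ : poch (β + 1) m ≠ 0) (hnm : n ≤ m) (q : ℍ[ℝ]) :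
    Zq β m n q = laguerre2D β m n q (star q) := by
  refine sum_congr rfl fun k hk ↦ ?_
  have hm := poch_eq_poch_sub_mul_choose β ((mem_range_succ_iff.mp hk).trans hnm)
  have hmk : poch (β + 1) (m - k) ≠ 0 := left_ne_zero_of_mul (hm ▸ hβ)
  rw [hm]
  congr 1
  field_simp

/-- Recurrence `Z^{(β)}_{m,n}(q,q̄) = Z^{(β)}_{m−1,n−1}(q,q̄) + q · Z^{(β)}_{m−1,n}(q,q̄)`. -/
theorem quat_recurrence_split (β : ℝ) (hβ : 0 ≤ β) (m n : ℕ) (hn : 1 ≤ n)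
    (hmn : n + 1 ≤ m) (q : ℍ[ℝ]) :
    Zq β m n q = Zq β (m - 1) (n - 1) q + q * Zq β (m - 1) n q := by
  have hpoch (j : ℕ) : poch (β + 1) j ≠ 0 := (poch_pos (by positivity) j).ne'
  rw [Zq_eq_laguerre2D (hpoch _) (by omega), Zq_eq_laguerre2D (hpoch _) (by omega),
    Zq_eq_laguerre2D (hpoch _) (by omega)]
  exact quat_recurrence_split_general β hn hmn q (star q)
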